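/- Let m ≥ 0 be an integer and let r be a primitive vector with (r,r) = −2 in the even unimodular lattice II_{2,8m+2} = 2U ⊕ mE8(−1). Then the orthogonal complement K_r = {x ∈ II_{2,8m+2} : (x,r) = 0}, with the restricted bilinear form, is isometric to U ⊕ mE8(−1) ⊕ ⟨2⟩. -/

import Mathlib

/-- The hyperbolic plane `U`, with Gram matrix `[[0,1],[1,0]]`. -/
def gramU : Matrix (Fin 2) (Fin 2) ℤ := !![0, 1; 1, 0]

/-- The Gram matrix of `E₈(−1)`: the negated Cartan (= Gram) matrix of the `E₈` root
lattice. -/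
def gramE8neg : Matrix (Fin 8) (Fin 8) ℤ := -CartanMatrix.E₈

/-- The Gram matrix of `m` orthogonal copies of `E₈(−1)`. -/
def gramE8copies (m : ℕ) : Matrix (Fin m × Fin 8) (Fin m × Fin 8) ℤ :=
  Matrix.of fun p q => if p.1 = q.1 then gramE8neg p.2 q.2 else 0

/-- Index set for `II_{2,8m+2} = 2U ⊕ mE₈(−1)`. -/
abbrev IdxII (m : ℕ) : Type := (Fin 2 ⊕ Fin 2) ⊕ Fin m × Fin 8

/-- The Gram matrix of the even unimodular lattice `II_{2,8m+2} = 2U ⊕ mE₈(−1)`. -/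
def gramII (m : ℕ) : Matrix (IdxII m) (IdxII m) ℤ :=
  Matrix.fromBlocks (Matrix.fromBlocks gramU 0 0 gramU) 0 0 (gramE8copies m)

/-- Index set for `L_{2d}^{(m)} = 2U ⊕ mE₈(−1) ⊕ ⟨−2d⟩`. -/
abbrev IdxL (m : ℕ) : Type := IdxII m ⊕ Fin 1

/-- The Gram matrix of `L_{2d}^{(m)} = 2U ⊕ mE₈(−1) ⊕ ⟨−2d⟩`. -/
def gramL (m d : ℕ) : Matrix (IdxL m) (IdxL m) ℤ :=
  Matrix.fromBlocks (gramII m) 0 0 !![-(2 * (d : ℤ))]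

/-- The bilinear form on `ι → ℤ` associated to a Gram matrix `G`:
`⟨x, y⟩ = ∑ i j, x i * G i j * y j`. -/
def bilin {ι : Type} [Fintype ι] (G : Matrix ι ι ℤ) (x y : ι → ℤ) : ℤ :=
  ∑ i, ∑ j, x i * G i j * y j

/-- `r` is primitive: `ℚr ∩ L = ℤr`, equivalently `r` is not a nontrivial integer
multiple of a lattice vector. -/
def IsPrim {ι : Type} (r : ι → ℤ) : Prop :=
  ∀ (k : ℤ) (x : ι → ℤ), r = k • x → IsUnit k

/-- `s = div(r)`: the positive generator of the ideal `{(r,l) : l ∈ L} ⊆ ℤ`. -/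
def IsDivisorOf {ι : Type} [Fintype ι] (G : Matrix ι ι ℤ) (r : ι → ℤ) (s : ℤ) : Prop :=
  0 < s ∧ (∀ l : ι → ℤ, s ∣ bilin G r l) ∧ ∃ l : ι → ℤ, bilin G r l = s

/-- Two lattices, given as `ℤ`-modules with `ℤ`-valued bilinear forms, are isometric. -/
def LatIsometric {M N : Type} [AddCommGroup M] [Module ℤ M] [AddCommGroup N] [Module ℤ N]
    (BM : M → M → ℤ) (BN : N → N → ℤ) : Prop :=
  ∃ e : M ≃ₗ[ℤ] N, ∀ x y : M, BN (e x) (e y) = BM x y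

/-- The orthogonal complement `K_r = {x : (x,r) = 0}` of `r`, as a `ℤ`-submodule. -/
def orthC {ι : Type} [Fintype ι] (G : Matrix ι ι ℤ) (r : ι → ℤ) :
    Submodule ℤ (ι → ℤ) where
  carrier := {x | bilin G x r = 0}
  zero_mem' := by simp [bilin]
  add_mem' := by
    intro a b ha hb
    simp only [Set.mem_setOf_eq, bilin, Pi.add_apply, add_mul, Finset.sum_add_distrib] at *
    rw [ha, hb, add_zero]
  smul_mem' := by
    intro c x hx
    simp only [Set.mem_setOf_eq, bilin, Pi.smul_apply, smul_eq_mul, mul_assoc,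
      ← Finset.mul_sum] at *
    rw [hx, mul_zero]

/-- Index set for `K_II^{(m)} = U ⊕ mE₈(−1) ⊕ ⟨2⟩`. -/
abbrev IdxKII (m : ℕ) : Type := (Fin 2 ⊕ Fin m × Fin 8) ⊕ Fin 1

/-- The Gram matrix of `K_II^{(m)} = U ⊕ mE₈(−1) ⊕ ⟨2⟩`. -/
def gramKII (m : ℕ) : Matrix (IdxKII m) (IdxKII m) ℤ :=
  Matrix.fromBlocks (Matrix.fromBlocks gramU 0 0 (gramE8copies m)) 0 0 !![(2 : ℤ)]

/-!
Let `q` be the quadratic form of the even lattice `U ⊕ U ⊕ L`. In the orbit of a vector `r` under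
isometries, choose one whose first coordinate `a` is minimal for divisibility. The isometries that
replace `a` by a combination of `a` and another coordinate, or of `a` and a pairing with `L`, force
`a` to divide every number `(r, s)`, so `a` is a unit when `r` has divisor one. A transvection then
moves `r` to `(1, q r)` in the first copy of `U`, whose orthogonal complement in that copy is
spanned by `(1, -q r)`. In a unimodular lattice, a primitive vector has divisor one.
-/

open QuadraticMap (polar)

section Eichler

variable {R M : Type*} [CommRing R] [AddCommGroup M] [Module R M]

/-- The hyperbolic plane `U` over a commutative ring, as the quadratic form `(a, b) ↦ a * b`; its
polar form has Gram matrix `[[0,1],[1,0]]`. -/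
def hyperbolicPlane (R : Type*) [CommRing R] : QuadraticForm R (R × R) :=
  QuadraticMap.linMulLin (LinearMap.fst R R R) (LinearMap.snd R R R)

/-- The isometries of a quadratic form with itself. -/
abbrev Automorph (Q : QuadraticForm R M) : Type _ :=
  Q.IsometryEquiv Q

theorem polar_isometryEquiv {N : Type*} [AddCommGroup N] [Module R N] {Q : QuadraticForm R M}
    {Q' : QuadraticForm R N} (e : Q.IsometryEquiv Q') (x y : M) :
    polar Q' (e x) (e y) = polar Q x y := by
  simp only [polar, ← map_add, e.map_app]

/-- The orthogonal sum `U ⊕ Q`. -/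
abbrev hyperbolicSum (Q : QuadraticForm R M) : QuadraticForm R ((R × R) × M) :=
  (hyperbolicPlane R).prod Q

@[simp]
theorem hyperbolicPlane_apply (x : R × R) : hyperbolicPlane R x = x.1 * x.2 :=
  rfl

@[simp]
theorem polar_hyperbolicPlane (x y : R × R) :
    polar (hyperbolicPlane R) x y = x.1 * y.2 + x.2 * y.1 := by
  simp only [polar, hyperbolicPlane_apply, Prod.fst_add, Prod.snd_add]
  ring

/-- The isometry of `U` exchanging its two isotropic basis vectors. -/
def hyperbolicPlane.swap (R : Type*) [CommRing R] : Automorph (hyperbolicPlane R) where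
  __ := LinearEquiv.prodComm R R R
  map_app' _ := mul_comm _ _

namespace hyperbolicSum

/-- The isometry of `U ⊕ Q` exchanging the two isotropic basis vectors of `U`. -/
def swapLeft (Q : QuadraticForm R M) : Automorph (hyperbolicSum Q) :=
  QuadraticMap.IsometryEquiv.prod (hyperbolicPlane.swap R) (QuadraticMap.IsometryEquiv.refl Q)

@[simp]
theorem swapLeft_apply (Q : QuadraticForm R M) (x : (R × R) × M) :
    swapLeft Q x = ((x.1.2, x.1.1), x.2) :=
  rfl

/-- The Eichler transvection of `U ⊕ Q` along `v`, fixing the second basis vector of `U`. -/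
def transvection (Q : QuadraticForm R M) (v : M) : Automorph (hyperbolicSum Q) where
  toFun x := ((x.1.1, x.1.2 - polar Q v x.2 - x.1.1 * Q v), x.2 + x.1.1 • v)
  invFun x := ((x.1.1, x.1.2 + polar Q v x.2 - x.1.1 * Q v), x.2 - x.1.1 • v)
  map_add' x y := by
    ext
    · simp
    · simp only [Prod.fst_add, Prod.snd_add, QuadraticMap.polar_add_right]
      ring
    · simp only [Prod.fst_add, Prod.snd_add, add_smul]
      abel
  map_smul' k x := by
    ext
    · simp
    · simp only [Prod.smul_fst, Prod.smul_snd, QuadraticMap.polar_smul_right, smul_eq_mul,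
        RingHom.id_apply]
      ring
    · simp [mul_smul]
  left_inv x := by
    ext
    · rfl
    · simp only [QuadraticMap.polar_add_right, QuadraticMap.polar_smul_right,
        QuadraticMap.polar_self, nsmul_eq_mul, Nat.cast_ofNat, smul_eq_mul]
      ring
    · simp
  right_inv x := by
    ext
    · rfl
    · simp only [QuadraticMap.polar_sub_right, QuadraticMap.polar_smul_right,
        QuadraticMap.polar_self, nsmul_eq_mul, Nat.cast_ofNat, smul_eq_mul]
      ring
    · simp
  map_app' x := by
    simp only [QuadraticMap.prod_apply, hyperbolicPlane_apply, QuadraticMap.map_add Q,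
      QuadraticMap.map_smul, QuadraticMap.polar_smul_right, QuadraticMap.polar_comm Q v,
      smul_eq_mul]
    ring

@[simp]
theorem transvection_apply (Q : QuadraticForm R M) (v : M) (x : (R × R) × M) :
    transvection Q v x = ((x.1.1, x.1.2 - polar Q v x.2 - x.1.1 * Q v), x.2 + x.1.1 • v) :=
  rfl

/-- The isometry of `U ⊕ U ⊕ Q` acting by the matrix `[[x, y], [-z, t]]` of determinant one on the
first coordinates of the two planes, and by its inverse transpose on the second ones. -/
def specialLinear (Q : QuadraticForm R M) {x y z t : R} (h : t * x + z * y = 1) :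
    Automorph (hyperbolicSum (hyperbolicSum Q)) where
  toFun := fun ((a, b), (c, d), w) =>
    ((x * a + y * c, t * b + z * d), (t * c - z * a, x * d - y * b), w)
  invFun := fun ((a, b), (c, d), w) =>
    ((t * a - y * c, x * b - z * d), (x * c + z * a, t * d + y * b), w)
  map_add' _ _ := by
    ext <;> simp only [Prod.mk_add_mk] <;> ring
  map_smul' _ _ := by
    ext <;>
    simp only [Prod.smul_fst, Prod.smul_snd, Prod.smul_mk, smul_eq_mul, RingHom.id_apply] <;>
    ring
  left_inv := fun ((a, b), (c, d), w) => by
    ext <;> dsimp only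
    · linear_combination a * h
    · linear_combination b * h
    · linear_combination c * h
    · linear_combination d * h
  right_inv := fun ((a, b), (c, d), w) => by
    ext <;> dsimp only
    · linear_combination a * h
    · linear_combination b * h
    · linear_combination c * h
    · linear_combination d * h
  map_app' := fun ((a, b), (c, d), w) => by
    simp only [QuadraticMap.prod_apply, hyperbolicPlane_apply]
    linear_combination (a * b + c * d) * h

/-- In `U` itself, the orthogonal complement of `(1, n)` is spanned by `(1, -n)`. -/
theorem restrict_ker_polarBilin_equivalent (Q : QuadraticForm R M) (n : R) :
    ((hyperbolicSum Q).restrict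
      (LinearMap.ker ((hyperbolicSum Q).polarBilin ((1, n), 0)))).Equivalent
      (Q.prod (-n • QuadraticMap.sq)) := by
  have mem_ker (x : (R × R) × M) :
      x ∈ LinearMap.ker ((hyperbolicSum Q).polarBilin ((1, n), 0)) ↔ x.1.2 = -n * x.1.1 := by
    simp [eq_neg_iff_add_eq_zero]
  exact ⟨{
    toFun x := (x.1.2, x.1.1.1)
    invFun x := ⟨((x.2, -n * x.2), x.1), (mem_ker _).2 rfl⟩
    map_add' _ _ := rfl
    map_smul' _ _ := rfl
    left_inv x := by
      ext
      · rfl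
      · exact ((mem_ker x).1 x.2).symm
      · rfl
    right_inv _ := rfl
    map_app' x := by
      simp only [QuadraticMap.restrict_apply, QuadraticMap.prod_apply, hyperbolicPlane_apply,
        (mem_ker x).1 x.2, smul_apply, QuadraticMap.sq_apply, smul_eq_mul]
      ring }⟩

end hyperbolicSum

open hyperbolicSum

/-- A vector of `U ⊕ Q` is first-coordinate minimal if its first coordinate is minimal for
divisibility in its orbit under the isometry group. This is the termination measure of Eichler's
reduction. -/
def IsFirstCoordMinimal (Q : QuadraticForm R M) (x : (R × R) × M) : Prop :=
  ∀ e : Automorph (hyperbolicSum Q), (e x).1.1 ∣ x.1.1 → x.1.1 ∣ (e x).1.1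

theorem exists_isFirstCoordMinimal [IsDomain R] [WfDvdMonoid R] (Q : QuadraticForm R M)
    (x : (R × R) × M) :
    ∃ e : Automorph (hyperbolicSum Q), IsFirstCoordMinimal Q (e x) := by
  obtain ⟨-, ⟨e, rfl⟩, hmin⟩ := (wellFounded_dvdNotUnit (α := R)).has_min
    (Set.range fun e : Automorph (hyperbolicSum Q) => (e x).1.1)
    ⟨_, QuadraticMap.IsometryEquiv.refl _, rfl⟩
  refine ⟨e, fun f hdvd => ?_⟩
  by_contra hndvd
  exact hmin _ ⟨e.trans f, rfl⟩ (dvdNotUnit_of_dvd_of_not_dvd hdvd hndvd)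

theorem exists_isCoprime_combination_dvd [IsDomain R] [IsBezout R] (a c : R) :
    ∃ x y, IsCoprime x y ∧ x * a + y * c ∣ a ∧ x * a + y * c ∣ c := by
  classical
  let _ : GCDMonoid R := IsBezout.toGCDDomain R
  obtain ⟨a', c', ha, hc, hunit⟩ := extract_gcd a c
  obtain ⟨x, y, hxy⟩ := (gcd_isUnit_iff a' c').1 hunit
  have hgcd : x * a + y * c = gcd a c := by
    linear_combination x * ha + y * hc + gcd a c * hxy
  exact ⟨x, y, ⟨a', c', by linear_combination hxy⟩, hgcd ▸ gcd_dvd_left a c,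
    hgcd ▸ gcd_dvd_right a c⟩

namespace IsFirstCoordMinimal

theorem of_first_eq {Q : QuadraticForm R M} {x : (R × R) × M} (hx : IsFirstCoordMinimal Q x)
    (e : Automorph (hyperbolicSum Q)) (he : (e x).1.1 = x.1.1) : IsFirstCoordMinimal Q (e x) :=
  fun f hdvd => he ▸ hx (e.trans f) (he ▸ hdvd)

variable [IsDomain R] [IsBezout R] {Q : QuadraticForm R M} {a b c d : R} {w : M}

theorem dvd_third (h : IsFirstCoordMinimal (hyperbolicSum Q) ((a, b), (c, d), w)) : a ∣ c := by
  obtain ⟨x, y, ⟨t, z, hdet⟩, ha, hc⟩ := exists_isCoprime_combination_dvd a c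
  exact (h (specialLinear Q hdet) ha).trans hc

theorem dvd_fourth (h : IsFirstCoordMinimal (hyperbolicSum Q) ((a, b), (c, d), w)) :
    a ∣ d :=
  (h.of_first_eq (QuadraticMap.IsometryEquiv.prod (.refl _) (swapLeft Q)) rfl).dvd_third

theorem dvd_polar (h : IsFirstCoordMinimal (hyperbolicSum Q) ((a, b), (c, d), w)) (v : M) :
    a ∣ polar Q v w := by
  have hd : a ∣ d - polar Q v w - c * Q v :=
    (h.of_first_eq (QuadraticMap.IsometryEquiv.prod (.refl _) (transvection Q v)) rfl).dvd_fourth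
  have hdiff := (h.dvd_fourth.sub hd).sub (h.dvd_third.mul_right (Q v))
  convert hdiff using 1
  ring

theorem dvd_second (h : IsFirstCoordMinimal (hyperbolicSum Q) ((a, b), (0, 0), w)) : a ∣ b := by
  let e := ((swapLeft (hyperbolicSum Q)).trans (transvection _ ((1, 0), 0))).trans (swapLeft _)
  have hcopy : e ((a, b), (0, 0), w) = ((a, b), (b, 0), w) := by
    change swapLeft _ (transvection _ _ (swapLeft _ _)) = _
    simp
  exact (hcopy ▸ h.of_first_eq e (by rw [hcopy])).dvd_third

theorem isUnit_first {x s : (R × R) × (R × R) × M}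
    (h : IsFirstCoordMinimal (hyperbolicSum Q) x)
    (hxs : polar (hyperbolicSum (hyperbolicSum Q)) x s = 1) : IsUnit x.1.1 := by
  obtain ⟨⟨a, b⟩, ⟨c, d⟩, w⟩ := x
  obtain ⟨c', rfl⟩ := h.dvd_third
  obtain ⟨d', rfl⟩ := h.dvd_fourth
  let e := transvection (hyperbolicSum Q) ((-c', -d'), 0)
  obtain ⟨b', hb'⟩ : ∃ b' : R, e ((a, b), (a * c', a * d'), w) = ((a, b'), (0, 0), w) := by
    simp [e]
  have hmin : IsFirstCoordMinimal (hyperbolicSum Q) ((a, b'), (0, 0), w) :=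
    hb' ▸ h.of_first_eq e rfl
  rw [← polar_isometryEquiv e, hb'] at hxs
  generalize e s = s' at hxs
  refine isUnit_of_dvd_one (hxs ▸ ?_)
  simpa [QuadraticMap.polar_comm Q w] using
    ((dvd_mul_right a s'.1.2).add (hmin.dvd_second.mul_right s'.1.1)).add (hmin.dvd_polar s'.2.2)

end IsFirstCoordMinimal

theorem exists_automorph_eq_of_first_eq_one (Q : QuadraticForm R M) {x : (R × R) × M}
    (hx : x.1.1 = 1) :
    ∃ e : Automorph (hyperbolicSum Q), e x = ((1, hyperbolicSum Q x), 0) := by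
  refine ⟨transvection Q (-x.2), ?_⟩
  ext
  · exact hx
  · simp only [transvection_apply, hx, QuadraticMap.polar_neg_left, QuadraticMap.polar_self,
      nsmul_eq_mul, Nat.cast_ofNat, QuadraticMap.map_neg, QuadraticMap.prod_apply,
      hyperbolicPlane_apply]
    ring
  · simp [hx]

/-- Eichler's criterion, for vectors of divisor one. -/
theorem exists_automorph_eq_of_polar_eq_one [IsDomain R] [IsPrincipalIdealRing R]
    (Q : QuadraticForm R M) {r s : (R × R) × (R × R) × M}
    (hrs : polar (hyperbolicSum (hyperbolicSum Q)) r s = 1) :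
    ∃ e : Automorph (hyperbolicSum (hyperbolicSum Q)),
      e r = ((1, hyperbolicSum (hyperbolicSum Q) r), 0) := by
  obtain ⟨e, he⟩ := exists_isFirstCoordMinimal (hyperbolicSum Q) r
  obtain ⟨u, hu⟩ : IsUnit (e r).1.1 :=
    he.isUnit_first (s := e s) ((polar_isometryEquiv e r s).trans hrs)
  let f := specialLinear Q (x := ↑u⁻¹) (y := 0) (z := 0) (t := ↑u) (by simp)
  have hf : (f (e r)).1.1 = 1 := by
    change ↑u⁻¹ * (e r).1.1 + 0 * (e r).2.1.1 = 1
    simp [← hu]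
  obtain ⟨g, hg⟩ := exists_automorph_eq_of_first_eq_one _ hf
  refine ⟨(e.trans f).trans g, hg.trans ?_⟩
  rw [f.map_app, e.map_app]

end Eichler

theorem exists_add_transpose_eq {ι R : Type*} [AddZeroClass R] {G : Matrix ι ι R}
    (hsymm : G.IsSymm) (heven : ∀ i, Even (G i i)) :
    ∃ T : Matrix ι ι R, T + T.transpose = G := by
  classical
  choose g hg using heven
  let _ : LinearOrder ι := linearOrderOfSTO WellOrderingRel
  refine ⟨.of fun i j => if i < j then G i j else if i = j then g i else 0, ?_⟩
  ext i j
  rcases lt_trichotomy i j with h | rfl | h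
  · simp [h, h.not_gt, h.ne']
  · simp [hg]
  · simp [h, h.not_gt, h.ne', hsymm.apply i j]

section Lattices

/-- The Gram matrix of `2U ⊕ L`, where `L` has Gram matrix `G`. -/
abbrev gramTwoU {ι : Type} (G : Matrix ι ι ℤ) :
    Matrix ((Fin 2 ⊕ Fin 2) ⊕ ι) ((Fin 2 ⊕ Fin 2) ⊕ ι) ℤ :=
  Matrix.fromBlocks (Matrix.fromBlocks gramU 0 0 gramU) 0 0 G

namespace LatIsometric

variable {L M N : Type} [AddCommGroup L] [Module ℤ L] [AddCommGroup M] [Module ℤ M]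
  [AddCommGroup N] [Module ℤ N]

theorem of_addEquiv {B : M → M → ℤ} {B' : N → N → ℤ} (e : M ≃+ N)
    (he : ∀ x y, B' (e x) (e y) = B x y) : LatIsometric B B' :=
  ⟨e.toIntLinearEquiv, he⟩

theorem symm {B : M → M → ℤ} {B' : N → N → ℤ} (h : LatIsometric B B') :
    LatIsometric B' B := by
  obtain ⟨e, he⟩ := h
  exact ⟨e.symm, fun x y => by rw [← he, e.apply_symm_apply, e.apply_symm_apply]⟩

theorem trans {B : L → L → ℤ} {B' : M → M → ℤ} {B'' : N → N → ℤ}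
    (h : LatIsometric B B') (h' : LatIsometric B' B'') : LatIsometric B B'' := by
  obtain ⟨e, he⟩ := h
  obtain ⟨e', he'⟩ := h'
  exact ⟨e.trans e', fun x y => (he' _ _).trans (he x y)⟩

end LatIsometric

variable {M N : Type} [AddCommGroup M] [AddCommGroup N]

theorem latIsometric_polar_of_equivalent {Q : QuadraticForm ℤ M} {Q' : QuadraticForm ℤ N}
    (h : Q.Equivalent Q') : LatIsometric (polar Q) (polar Q') := by
  obtain ⟨e⟩ := h
  exact .of_addEquiv e.toLinearEquiv.toAddEquiv (polar_isometryEquiv e)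

theorem latIsometric_gramU : LatIsometric (bilin gramU) (polar (hyperbolicPlane ℤ)) :=
  .of_addEquiv (LinearEquiv.finTwoArrow ℤ ℤ).toAddEquiv fun x y => by
    simp [bilin, gramU, LinearEquiv.finTwoArrow, Fin.sum_univ_two]

theorem latIsometric_singleton (k : ℤ) :
    LatIsometric (bilin !![2 * k]) (polar (k • QuadraticMap.sq : QuadraticForm ℤ ℤ)) :=
  .of_addEquiv (LinearEquiv.funUnique (Fin 1) ℤ ℤ).toAddEquiv fun x y => by
    calc
      polar (k • QuadraticMap.sq : QuadraticForm ℤ ℤ) (x 0) (y 0) = x 0 * (2 * k) * y 0 := by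
        simp only [polar, smul_apply, QuadraticMap.sq_apply, smul_eq_mul]
        ring
      _ = bilin !![2 * k] x y := by simp [bilin]

variable {ι κ : Type} [Fintype ι] [Fintype κ]

theorem LatIsometric.fromBlocks {G : Matrix ι ι ℤ} {H : Matrix κ κ ℤ} {Q : QuadraticForm ℤ M}
    {Q' : QuadraticForm ℤ N} (hG : LatIsometric (bilin G) (polar Q))
    (hH : LatIsometric (bilin H) (polar Q')) :
    LatIsometric (bilin (Matrix.fromBlocks G 0 0 H)) (polar (Q.prod Q')) := by
  obtain ⟨e, he⟩ := hG
  obtain ⟨f, hf⟩ := hH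
  refine .of_addEquiv ((LinearEquiv.sumArrowLequivProdArrow ι κ ℤ ℤ).toAddEquiv.trans
    (e.toAddEquiv.prodCongr f.toAddEquiv)) fun x y => ?_
  rw [QuadraticMap.polar_prod]
  refine (congrArg₂ (· + ·) (he _ _) (hf _ _)).trans ?_
  simp [bilin, Fintype.sum_sum_type]

theorem LatIsometric.gramTwoU {G : Matrix ι ι ℤ} {Q : QuadraticForm ℤ M}
    (hG : LatIsometric (bilin G) (polar Q)) :
    LatIsometric (bilin (gramTwoU G)) (polar (hyperbolicSum (hyperbolicSum Q))) :=
  ((latIsometric_gramU.fromBlocks latIsometric_gramU).fromBlocks hG).trans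
    (.of_addEquiv (AddEquiv.prodAssoc (M := ℤ × ℤ)) fun x y => by simp [add_assoc])

theorem latIsometric_orthC {G : Matrix ι ι ℤ} {Q : QuadraticForm ℤ M} (e : (ι → ℤ) ≃+ M)
    (he : ∀ x y, polar Q (e x) (e y) = bilin G x y) {r : ι → ℤ} {s : M} (hs : e r = s) :
    LatIsometric (fun x y : orthC G r => bilin G (x : ι → ℤ) (y : ι → ℤ))
      (polar (Q.restrict (LinearMap.ker (Q.polarBilin s)))) := by
  have hmem (x : ι → ℤ) : x ∈ orthC G r ↔ e x ∈ LinearMap.ker (Q.polarBilin s) := by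
    rw [LinearMap.mem_ker, QuadraticMap.polarBilin_apply_apply, QuadraticMap.polar_comm, ← hs, he]
    rfl
  exact .of_addEquiv
    { e.toEquiv.subtypeEquiv hmem with map_add' := fun x y => Subtype.ext (map_add e _ _) }
    fun x y => he x y

theorem exists_quadraticForm_polar_eq_bilin {G : Matrix ι ι ℤ} (hsymm : G.IsSymm)
    (heven : ∀ i, Even (G i i)) :
    ∃ Q : QuadraticForm ℤ (ι → ℤ), ∀ x y, polar Q x y = bilin G x y := by
  classical
  obtain ⟨T, rfl⟩ := exists_add_transpose_eq hsymm heven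
  refine ⟨T.toBilin'.toQuadraticMap, fun x y => ?_⟩
  rw [LinearMap.BilinMap.polar_toQuadraticMap, Matrix.toBilin'_apply, Matrix.toBilin'_apply,
    Finset.sum_comm (f := fun i j => y i * T i j * x j), ← Finset.sum_add_distrib]
  simp only [bilin, ← Finset.sum_add_distrib, Matrix.add_apply, Matrix.transpose_apply]
  exact Finset.sum_congr rfl fun i _ => Finset.sum_congr rfl fun j _ => by ring

theorem IsPrim.vecMul [DecidableEq ι] {G : Matrix ι ι ℤ} (hG : IsUnit G.det) {r : ι → ℤ}
    (hr : IsPrim r) : IsPrim (Matrix.vecMul r G) := by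
  intro k v hv
  refine hr k (Matrix.vecMul v G⁻¹) ?_
  rw [← Matrix.smul_vecMul, ← hv, Matrix.vecMul_vecMul, Matrix.mul_nonsing_inv G hG,
    Matrix.vecMul_one]

theorem IsPrim.exists_sum_mul_eq_one {v : ι → ℤ} (hv : IsPrim v) :
    ∃ l : ι → ℤ, ∑ i, l i * v i = 1 := by
  obtain ⟨k, hk⟩ := IsPrincipalIdealRing.principal (Ideal.span (Set.range v))
  have hdvd (i : ι) : k ∣ v i :=
    Ideal.mem_span_singleton.1 (hk.le (Ideal.subset_span (Set.mem_range_self i)))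
  choose v' hv' using hdvd
  have hunit : IsUnit k := hv k v' (funext hv')
  refine Ideal.mem_span_range_iff_exists_fun.1 ?_
  rw [hk]
  exact Ideal.mem_span_singleton.2 hunit.dvd

theorem isDivisorOf_one_of_isPrim [DecidableEq ι] {G : Matrix ι ι ℤ} (hG : IsUnit G.det)
    {r : ι → ℤ} (hr : IsPrim r) : IsDivisorOf G r 1 := by
  obtain ⟨l, hl⟩ := (hr.vecMul hG).exists_sum_mul_eq_one
  refine ⟨one_pos, fun _ => one_dvd _, l, ?_⟩
  rw [← hl, bilin, Finset.sum_comm]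
  simp only [Matrix.vecMul, dotProduct, Finset.mul_sum, mul_comm]

end Lattices

section E8

variable (m : ℕ)

theorem gramE8copies_eq_kronecker :
    gramE8copies m = Matrix.kronecker (1 : Matrix (Fin m) (Fin m) ℤ) gramE8neg := by
  ext p q
  simp [gramE8copies, Matrix.one_apply]

theorem isSymm_gramE8copies : (gramE8copies m).IsSymm := by
  rw [gramE8copies_eq_kronecker, Matrix.IsSymm, Matrix.kronecker, ← Matrix.kroneckerMap_transpose,
    Matrix.transpose_one, gramE8neg, Matrix.transpose_neg, CartanMatrix.E₈_transpose]

theorem even_gramE8copies_diag (p : Fin m × Fin 8) : Even (gramE8copies m p p) := by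
  simp [gramE8copies, gramE8neg]

theorem isUnit_det_gramII : IsUnit (gramII m).det := by
  have hU : gramU.det = -1 := by simp [gramU, Matrix.det_fin_two]
  simp [gramII, gramE8copies_eq_kronecker, gramE8neg, Matrix.det_kronecker, Matrix.det_neg,
    CartanMatrix.E₈_det, hU]

end E8

theorem orthogonal_complement_of_minus_two_vector_in_II_general {ι : Type} [Fintype ι]
    {G : Matrix ι ι ℤ} (hsymm : G.IsSymm) (heven : ∀ i, Even (G i i))
    {r : (Fin 2 ⊕ Fin 2) ⊕ ι → ℤ} {n : ℤ}
    (hdiv : IsDivisorOf (gramTwoU G) r 1) (hr : bilin (gramTwoU G) r r = -n) :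
    LatIsometric
      (fun x y : orthC (gramTwoU G) r =>
        bilin (gramTwoU G) (x : (Fin 2 ⊕ Fin 2) ⊕ ι → ℤ) (y : (Fin 2 ⊕ Fin 2) ⊕ ι → ℤ))
      (bilin (Matrix.fromBlocks (Matrix.fromBlocks gramU 0 0 G) 0 0 !![n])) := by
  obtain ⟨Q, hQ⟩ := exists_quadraticForm_polar_eq_bilin hsymm heven
  have hG : LatIsometric (bilin G) (polar Q) := .of_addEquiv (AddEquiv.refl _) hQ
  obtain ⟨φ, hφ⟩ := LatIsometric.gramTwoU hG
  obtain ⟨-, -, l, hl⟩ := hdiv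
  obtain ⟨e, he⟩ := exists_automorph_eq_of_polar_eq_one Q ((hφ r l).trans hl)
  have horth := latIsometric_orthC (φ.toAddEquiv.trans e.toLinearEquiv.toAddEquiv)
    (fun x y => (polar_isometryEquiv e _ _).trans (hφ x y)) he
  obtain rfl : n = 2 * -hyperbolicSum (hyperbolicSum Q) (φ r) := by
    have hself := hφ r r
    rw [QuadraticMap.polar_self, hr, nsmul_eq_mul] at hself
    push_cast at hself
    linarith
  exact (horth.trans (latIsometric_polar_of_equivalent
    (hyperbolicSum.restrict_ker_polarBilin_equivalent (hyperbolicSum Q) _))).trans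
      ((latIsometric_gramU.fromBlocks hG).fromBlocks (latIsometric_singleton _)).symm

/-- The orthogonal complement of a primitive vector `r` with
`(r,r) = −2` in `II_{2,8m+2}`, with the restricted bilinear form, is isometric to
`U ⊕ mE₈(−1) ⊕ ⟨2⟩`. -/
theorem orthogonal_complement_of_minus_two_vector_in_II
    (m : ℕ) (r : IdxII m → ℤ) (hprim : IsPrim r)
    (hr : bilin (gramII m) r r = -2) :
    LatIsometric
      (fun x y : ↥(orthC (gramII m) r) => bilin (gramII m) (x : IdxII m → ℤ) (y : IdxII m → ℤ))
      (bilin (gramKII m)) := by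
  exact orthogonal_complement_of_minus_two_vector_in_II_general (isSymm_gramE8copies m)
    (even_gramE8copies_diag m) (isDivisorOf_one_of_isPrim (isUnit_det_gramII m) hprim) hr
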